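/- For every κ > 0 and μ > 0 with T/μ → 0, the quantity m_μ^{(κ)}(T) = (1/(4π)) ∫_{ℝ³} ( 1/K_{T,μ}(p) − 1/(p² + κ²μ) ) dp satisfies m_μ^{(κ)}(T) = √μ ( log(μ/T) + γ − 2 + log(8/π) + κπ/2 + o(1) ), where γ is the Euler–Mascheroni constant. -/

import Mathlib

open MeasureTheory Filter Topology

noncomputable section

abbrev E3 := EuclideanSpace ℝ (Fin 3)

/-- The BCS kernel `K_{T,μ}(p) = |p² − μ| / tanh(|p² − μ|/(2T))`, extended by
continuity to equal `2T` when `p² = μ`. -/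
def Kfun (T μ : ℝ) (p : E3) : ℝ :=
  if ‖p‖ ^ 2 = μ then 2 * T
  else |‖p‖ ^ 2 - μ| / Real.tanh (|‖p‖ ^ 2 - μ| / (2 * T))

/-- `m_μ^{(κ)}(T) = (1/(4π)) ∫ (1/K_{T,μ}(p) − 1/(p² + κ²μ)) dp`. -/
def mFun (T μ κ : ℝ) : ℝ :=
  (1 / (4 * Real.pi)) *
    ∫ p : E3, (1 / Kfun T μ p - 1 / (‖p‖ ^ 2 + κ ^ 2 * μ))

theorem aux_cont_tanh : Continuous Real.tanh := by
  have : Real.tanh = fun x => Real.sinh x / Real.cosh x := by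
    funext x; exact Real.tanh_eq_sinh_div_cosh x
  rw [this]
  exact Real.continuous_sinh.div Real.continuous_cosh (fun x => (Real.cosh_pos x).ne')

theorem aux_one_sub_tanh (x : ℝ) :
    1 - Real.tanh x = 2 * Real.exp (-2 * x) / (1 + Real.exp (-2 * x)) := by
  rw [Real.tanh_eq_sinh_div_cosh, Real.sinh_eq, Real.cosh_eq]
  have h : Real.exp (-2 * x) = Real.exp (-x) / Real.exp x := by
    rw [← Real.exp_sub]; ring_nf
  rw [h]
  have h1 := Real.exp_pos x
  have h2 := Real.exp_pos (-x)
  field_simp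
  ring

theorem aux_one_sub_tanh_nonneg (x : ℝ) : 0 ≤ 1 - Real.tanh x := by
  linarith [Real.tanh_lt_one x]

theorem aux_one_sub_tanh_le_exp (x : ℝ) : 1 - Real.tanh x ≤ 2 * Real.exp (-2 * x) := by
  rw [aux_one_sub_tanh]
  have h2 := Real.exp_pos (-2 * x)
  rw [div_le_iff₀ (by positivity)]
  nlinarith

theorem aux_one_sub_tanh_le {x : ℝ} (hx : 0 < x) : 1 - Real.tanh x ≤ 1 / x := by
  refine (aux_one_sub_tanh_le_exp x).trans ?_
  have h := Real.add_one_le_exp (2 * x)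
  have : Real.exp (-2 * x) = 1 / Real.exp (2 * x) := by
    rw [one_div, ← Real.exp_neg]; ring_nf
  rw [this, mul_one_div, div_le_div_iff₀ (Real.exp_pos _) hx]
  linarith

theorem aux_tanh_nonneg {x : ℝ} (hx : 0 ≤ x) : 0 ≤ Real.tanh x := by
  rw [Real.tanh_eq_sinh_div_cosh]
  exact div_nonneg (Real.sinh_nonneg_iff.2 hx) (Real.cosh_pos x).le

theorem aux_tanh_le {x : ℝ} (hx : 0 ≤ x) : Real.tanh x ≤ x := by
  have h := aux_one_sub_tanh x
  have h2 := Real.exp_pos (-2 * x)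
  have h3 := Real.add_one_le_exp (-2 * x)
  -- monotonicity of x cosh x - sinh x
  rw [Real.tanh_eq_sinh_div_cosh, div_le_iff₀ (Real.cosh_pos x)]
  have hd : ∀ y : ℝ, HasDerivAt (fun y => y * Real.cosh y - Real.sinh y) (y * Real.sinh y) y := by
    intro y
    have := ((hasDerivAt_id y).mul (Real.hasDerivAt_cosh y)).sub (Real.hasDerivAt_sinh y)
    refine this.congr_deriv ?_
    simp only [id]
    ring
  have hm : MonotoneOn (fun y => y * Real.cosh y - Real.sinh y) (Set.Ici 0) := by
    apply monotoneOn_of_deriv_nonneg (convex_Ici 0)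
    · fun_prop
    · fun_prop
    · intro y hy
      rw [interior_Ici] at hy
      rw [(hd y).deriv]
      exact mul_nonneg (le_of_lt hy) (Real.sinh_nonneg_iff.2 (le_of_lt hy))
  have := hm (Set.mem_Ici.2 le_rfl) (Set.mem_Ici.2 hx) hx
  simp at this
  linarith

theorem aux_tanh_abs_div (c x : ℝ) :
    Real.tanh (c * |x|) / |x| = Real.tanh (c * x) / x := by
  rcases abs_cases x with ⟨h, _⟩ | ⟨h, _⟩
  · rw [h]
  · rw [h, mul_neg, Real.tanh_neg, neg_div_neg_eq]

theorem aux_tendsto_tanh : Tendsto Real.tanh atTop (𝓝 1) := by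
  have h1 : Tendsto (fun x : ℝ => 1 - 1 / x) atTop (𝓝 1) := by
    have : Tendsto (fun x : ℝ => 1 / x) atTop (𝓝 0) := by
      simpa using tendsto_inv_atTop_zero (𝕜 := ℝ)
    simpa using this.const_sub 1
  refine tendsto_of_tendsto_of_tendsto_of_le_of_le' h1 tendsto_const_nhds ?_ ?_
  · filter_upwards [eventually_gt_atTop 0] with x hx
    linarith [aux_one_sub_tanh_le hx]
  · filter_upwards with x
    exact (Real.tanh_lt_one x).le

/-- Reduction to a one-dimensional integral. -/
theorem aux_reduce (κ T μ : ℝ) (hμ : 0 < μ) :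
    mFun T μ κ / Real.sqrt μ =
      ∫ p in Set.Ioi (0:ℝ), (p ^ 2 * (Real.tanh (μ / (2 * T) * (p ^ 2 - 1)) / (p ^ 2 - 1))
        - p ^ 2 / (p ^ 2 + κ ^ 2)) := by
  set f : ℝ → ℝ := fun r => 1 / (if r ^ 2 = μ then 2 * T
    else |r ^ 2 - μ| / Real.tanh (|r ^ 2 - μ| / (2 * T))) - 1 / (r ^ 2 + κ ^ 2 * μ) with hf
  have h1 : ∫ p : E3, (1 / Kfun T μ p - 1 / (‖p‖ ^ 2 + κ ^ 2 * μ)) = ∫ p : E3, f ‖p‖ := rfl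
  have hs : 0 < Real.sqrt μ := Real.sqrt_pos.2 hμ
  have hsq : Real.sqrt μ ^ 2 = μ := Real.sq_sqrt hμ.le
  have h2 := integral_fun_norm_addHaar (volume : Measure E3) f
  have h3 : (volume : Measure E3).real (Metric.ball 0 1) = Real.pi * 4 / 3 := by
    rw [measureReal_def, EuclideanSpace.volume_ball_fin_three]
    have : 0 ≤ Real.pi * 4 / 3 := by positivity
    simp [ENNReal.toReal_ofReal this]
  have h4 : Module.finrank ℝ E3 = 3 := by simp
  rw [h4, h3] at h2
  have h5 := integral_comp_mul_left_Ioi (fun y => y ^ (3 - 1) • f y) 0 hs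
  rw [mul_zero] at h5
  have h6 : ∫ y in Set.Ioi (0:ℝ), y ^ (3 - 1) • f y
      = Real.sqrt μ * ∫ p in Set.Ioi (0:ℝ), (Real.sqrt μ * p) ^ (3 - 1) • f (Real.sqrt μ * p) := by
    rw [h5, smul_eq_mul, mul_inv_cancel_left₀ hs.ne']
  unfold mFun
  rw [h1, h2, h6]
  have h7 : ∫ p in Set.Ioi (0:ℝ), (Real.sqrt μ * p) ^ (3 - 1) • f (Real.sqrt μ * p)
      = ∫ p in Set.Ioi (0:ℝ), (p ^ 2 * (Real.tanh (μ / (2 * T) * (p ^ 2 - 1)) / (p ^ 2 - 1))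
        - p ^ 2 / (p ^ 2 + κ ^ 2)) := by
    apply setIntegral_congr_ae measurableSet_Ioi
    have hae : ∀ᵐ p : ℝ, p ≠ 1 := by
      simp [ae_iff, measure_singleton]
    filter_upwards [hae] with p hp hp0
    have hp0 : 0 < p := hp0
    have hne : p ^ 2 - 1 ≠ 0 := by
      intro h
      apply hp
      nlinarith
    have hmul : (Real.sqrt μ * p) ^ 2 = μ * p ^ 2 := by rw [mul_pow, hsq]
    have hne2 : μ * p ^ 2 ≠ μ := by
      intro h
      apply hne
      have : μ * (p ^ 2 - 1) = 0 := by linarith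
      rcases mul_eq_zero.1 this with h | h
      · exact absurd h hμ.ne'
      · exact h
    have e : |μ * p ^ 2 - μ| = μ * |p ^ 2 - 1| := by
      rw [show μ * p ^ 2 - μ = μ * (p ^ 2 - 1) by ring, abs_mul, abs_of_pos hμ]
    have e2 : Real.tanh (μ * |p ^ 2 - 1| / (2 * T)) / |p ^ 2 - 1|
       = Real.tanh (μ / (2 * T) * (p ^ 2 - 1)) / (p ^ 2 - 1) := by
      rw [← aux_tanh_abs_div]; ring_nf
    rw [← e2]
    simp only [hf, hmul, if_neg hne2, e, smul_eq_mul]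
    have hpos : 0 < p ^ 2 + κ ^ 2 := by positivity
    have ha : |p ^ 2 - 1| ≠ 0 := abs_ne_zero.2 hne
    rw [one_div_div, mul_sub]
    congr 1
    · field_simp
    · rw [show μ * p ^ 2 + κ ^ 2 * μ = μ * (p ^ 2 + κ ^ 2) by ring]
      field_simp
  rw [h7]
  simp only [smul_eq_mul, nsmul_eq_mul]
  have := Real.pi_pos
  push_cast
  field_simp

theorem aux_frul_int {α β : ℝ} (hα : 0 < α) (hab : α ≤ β) :
    IntegrableOn (fun x : ℝ => x⁻¹ * (Real.exp (-(α * x)) - Real.exp (-(β * x)))) (Set.Ioi 0) := by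
  have hg : IntegrableOn (fun x : ℝ => (β - α) * Real.exp (-α * x)) (Set.Ioi 0) :=
    (exp_neg_integrableOn_Ioi 0 hα).const_mul _
  refine Integrable.mono' hg (by fun_prop) ?_
  refine (ae_restrict_iff' measurableSet_Ioi).2 (Eventually.of_forall fun x hx => ?_)
  have hx : 0 < x := hx
  have h1 : Real.exp (-(β * x)) = Real.exp (-(α * x)) * Real.exp (-((β - α) * x)) := by
    rw [← Real.exp_add]; ring_nf
  have h2 := Real.add_one_le_exp (-((β - α) * x))
  have h3 : Real.exp (-((β - α) * x)) ≤ 1 := by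
    rw [Real.exp_le_one_iff]
    have : 0 ≤ (β - α) * x := mul_nonneg (by linarith) hx.le
    linarith
  have h4 := Real.exp_pos (-(α * x))
  rw [neg_mul, h1, Real.norm_of_nonneg]
  · rw [inv_mul_le_iff₀ hx]
    nlinarith
  · refine mul_nonneg (by positivity) ?_
    nlinarith

theorem aux_frul {α β : ℝ} (hα : 0 < α) (hab : α ≤ β) :
    ∫ x in Set.Ioi (0:ℝ), x⁻¹ * (Real.exp (-(α * x)) - Real.exp (-(β * x))) = Real.log (β / α) := by
  have h := Frullani.integral_Ioi_eq (f := fun x : ℝ => Real.exp (-x)) (a := α) (b := β)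
    (L := 1) (R := 0) ?_ hα (hα.trans_le hab) ?_ ?_ ?_
  · simpa using h
  · exact (Continuous.continuousOn (by fun_prop)).locallyIntegrableOn measurableSet_Ioi
  · have : Continuous (fun x : ℝ => Real.exp (-x)) := by fun_prop
    have h := this.tendsto 0
    simp only [neg_zero, Real.exp_zero] at h
    exact h.mono_left nhdsWithin_le_nhds
  · exact Real.tendsto_exp_neg_atTop_nhds_zero
  · simpa using aux_frul_int hα hab

/-- Terms of the expansion of `1 - tanh`. -/
def auxG (j : ℕ) (u : ℝ) : ℝ :=
  u⁻¹ * (Real.exp (-((2 * (2 * j + 1)) * u)) - Real.exp (-((2 * (2 * j + 2)) * u)))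
    - u⁻¹ * (Real.exp (-((2 * (2 * j + 2)) * u)) - Real.exp (-((2 * (2 * j + 3)) * u)))

theorem auxG_eq (j : ℕ) (u : ℝ) :
    auxG j u = u⁻¹ * ((1 - Real.exp (-2 * u)) ^ 2 * Real.exp (-2 * u))
      * (Real.exp (-2 * u) ^ 2) ^ j := by
  have h : ∀ n : ℕ, Real.exp (-2 * u) ^ n = Real.exp (-(2 * n * u)) := by
    intro n; rw [← Real.exp_nat_mul]; ring_nf
  have e1 := h (2 * j + 1)
  have e2 := h (2 * j + 2)
  have e3 := h (2 * j + 3)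
  push_cast at e1 e2 e3
  unfold auxG
  rw [← e1, ← e2, ← e3]
  ring

theorem auxG_int (j : ℕ) : IntegrableOn (auxG j) (Set.Ioi 0) := by
  unfold auxG
  exact (aux_frul_int (by positivity) (by linarith)).sub (aux_frul_int (by positivity) (by linarith))

theorem auxG_integral (j : ℕ) : ∫ u in Set.Ioi (0:ℝ), auxG j u
    = Real.log (((2 : ℝ) * j + 2) / (2 * j + 1) * ((2 * j + 2) / (2 * j + 3))) := by
  unfold auxG
  rw [integral_sub (aux_frul_int (by positivity) (by linarith))
    (aux_frul_int (by positivity) (by linarith)), aux_frul (by positivity) (by linarith),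
    aux_frul (by positivity) (by linarith), ← Real.log_div (by positivity) (by positivity)]
  congr 1
  field_simp

theorem auxG_nonneg (j : ℕ) {u : ℝ} (hu : 0 < u) : 0 ≤ auxG j u := by
  rw [auxG_eq]; positivity

theorem auxG_hasSum {u : ℝ} (hu : 0 < u) :
    HasSum (fun j => auxG j u) (u⁻¹ * (1 - Real.tanh u - Real.exp (-2 * u))) := by
  have hx0 := Real.exp_pos (-2 * u)
  have hx1 : Real.exp (-2 * u) < 1 := by rw [Real.exp_lt_one_iff]; linarith
  have hg := (hasSum_geometric_of_lt_one (r := Real.exp (-2 * u) ^ 2) (by positivity)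
    (by nlinarith)).mul_left (u⁻¹ * ((1 - Real.exp (-2 * u)) ^ 2 * Real.exp (-2 * u)))
  simp only [auxG_eq]
  rw [aux_one_sub_tanh]
  suffices hh : u⁻¹ * (2 * Real.exp (-2 * u) / (1 + Real.exp (-2 * u)) - Real.exp (-2 * u)) =
      u⁻¹ * ((1 - Real.exp (-2 * u)) ^ 2 * Real.exp (-2 * u)) * (1 - Real.exp (-2 * u) ^ 2)⁻¹ by
    rw [hh]; exact hg
  clear hg
  generalize Real.exp (-2 * u) = x at *
  have h1 : 1 - x ^ 2 ≠ 0 := by nlinarith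
  have h2 : 1 + x ≠ 0 := by linarith
  rw [show (1 - x ^ 2) = (1 - x) * (1 + x) by ring]
  have h3 : 1 - x ≠ 0 := by linarith
  field_simp
  ring

theorem aux_hasSum_wallis :
    HasSum (fun j : ℕ => Real.log (((2 : ℝ) * j + 2) / (2 * j + 1) * ((2 * j + 2) / (2 * j + 3))))
      (Real.log (Real.pi / 2)) := by
  rw [hasSum_iff_tendsto_nat_of_nonneg]
  · have h := (Real.continuousAt_log (x := Real.pi / 2) (by positivity)).tendsto.comp
      Real.tendsto_prod_pi_div_two
    refine h.congr fun n => ?_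
    simp only [Function.comp]
    rw [Real.log_prod]
    intro i _
    positivity
  · intro j
    rw [← auxG_integral]
    exact setIntegral_nonneg measurableSet_Ioi fun u hu => auxG_nonneg j hu

theorem aux_wallis_integral :
    ∫ u in Set.Ioi (0:ℝ), u⁻¹ * (1 - Real.tanh u - Real.exp (-2 * u)) = Real.log (Real.pi / 2) := by
  have hn : ∀ j, ∫ u in Set.Ioi (0:ℝ), ‖auxG j u‖ = ∫ u in Set.Ioi (0:ℝ), auxG j u := by
    intro j
    refine setIntegral_congr_fun measurableSet_Ioi fun u hu => ?_
    exact Real.norm_of_nonneg (auxG_nonneg j hu)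
  have h := hasSum_integral_of_summable_integral_norm (μ := volume.restrict (Set.Ioi (0:ℝ)))
    (F := auxG) (fun j => auxG_int j) (by
      simp only [hn, auxG_integral]
      exact aux_hasSum_wallis.summable)
  simp only [auxG_integral] at h
  rw [← h.unique aux_hasSum_wallis]
  refine setIntegral_congr_fun measurableSet_Ioi fun u hu => ?_
  exact (auxG_hasSum hu).tsum_eq.symm

theorem aux_wallis_integrable :
    IntegrableOn (fun u : ℝ => u⁻¹ * (1 - Real.tanh u - Real.exp (-2 * u))) (Set.Ioi 0) := by
  have hg : IntegrableOn (fun x : ℝ => 2 * Real.exp (-2 * x)) (Set.Ioi 0) :=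
    (exp_neg_integrableOn_Ioi 0 (by norm_num)).const_mul _
  have hm : Measurable Real.tanh := aux_cont_tanh.measurable
  refine Integrable.mono' hg (by fun_prop) ?_
  refine (ae_restrict_iff' measurableSet_Ioi).2 (Eventually.of_forall fun u hu => ?_)
  have hu : 0 < u := hu
  have h1 := Real.add_one_le_exp (-2 * u)
  have hx0 := Real.exp_pos (-2 * u)
  have hx1 : Real.exp (-2 * u) < 1 := by rw [Real.exp_lt_one_iff]; linarith
  rw [aux_one_sub_tanh]
  generalize Real.exp (-2 * u) = x at *
  have e : 2 * x / (1 + x) - x = x * (1 - x) / (1 + x) := by field_simp; ring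
  have hpos : 0 ≤ x * (1 - x) / (1 + x) :=
    div_nonneg (mul_nonneg hx0.le (by linarith)) (by linarith)
  rw [e, Real.norm_of_nonneg (mul_nonneg (by positivity) hpos), inv_mul_le_iff₀ hu,
    div_le_iff₀ (by linarith)]
  have : x * (1 - x) ≤ x * (2 * u) := mul_le_mul_of_nonneg_left (by linarith) hx0.le
  nlinarith [mul_pos (mul_pos hu hx0) hx0]

theorem aux_D_integrable :
    IntegrableOn (fun u : ℝ => u⁻¹ * (Real.exp (-u) - (1 - Real.tanh u))) (Set.Ioi 0) := by
  have h := (aux_frul_int (α := 1) (β := 2) one_pos (by norm_num)).sub aux_wallis_integrable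
  refine h.congr (Eventually.of_forall fun u => ?_)
  simp only [Pi.sub_apply, one_mul, neg_mul]
  ring

theorem aux_D : ∫ u in Set.Ioi (0:ℝ), u⁻¹ * (Real.exp (-u) - (1 - Real.tanh u))
    = Real.log (4 / Real.pi) := by
  have h := integral_sub (aux_frul_int (α := 1) (β := 2) one_pos (by norm_num))
    aux_wallis_integrable
  rw [aux_wallis_integral, aux_frul one_pos (by norm_num),
    ← Real.log_div (by norm_num) (by positivity)] at h
  have e : (2:ℝ) / 1 / (Real.pi / 2) = 4 / Real.pi := by
    have := Real.pi_pos
    field_simp; norm_num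
  rw [← e, ← h]
  congr 1
  funext u
  simp only [one_mul, neg_mul]
  ring

theorem aux_logexp_integrable :
    IntegrableOn (fun t : ℝ => Real.log t * Real.exp (-t)) (Set.Ioi 0) := by
  rw [← Set.Ioc_union_Ioi_eq_Ioi (zero_le_one (α := ℝ))]
  refine IntegrableOn.union ?_ ?_
  · have h : IntegrableOn Real.log (Set.Ioc 0 1) :=
      (intervalIntegrable_iff_integrableOn_Ioc_of_le zero_le_one).1
        intervalIntegral.intervalIntegrable_log'
    refine Integrable.mono h.norm (by fun_prop) ?_
    refine (ae_restrict_iff' measurableSet_Ioc).2 (Eventually.of_forall fun u hu => ?_)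
    rw [norm_mul, norm_norm, Real.norm_of_nonneg (Real.exp_pos _).le]
    have : Real.exp (-u) ≤ 1 := by rw [Real.exp_le_one_iff]; linarith [hu.1]
    nlinarith [norm_nonneg (Real.log u)]
  · have hg : IntegrableOn (fun x : ℝ => 2 * Real.exp (-(1/2) * x)) (Set.Ioi 1) :=
      (exp_neg_integrableOn_Ioi 1 (by norm_num)).const_mul _
    refine Integrable.mono' hg (by fun_prop) ?_
    refine (ae_restrict_iff' measurableSet_Ioi).2 (Eventually.of_forall fun u hu => ?_)
    have hu : 1 < u := hu
    have h1 := Real.log_nonneg hu.le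
    have h2 : Real.log u ≤ u := (Real.log_le_sub_one_of_pos (by linarith)).trans (by linarith)
    have h3 : u ≤ 2 * Real.exp (1/2 * u) := by linarith [Real.add_one_le_exp (1/2 * u)]
    have h4 : Real.exp (-(1/2) * u) = Real.exp (1/2 * u) * Real.exp (-u) := by
      rw [← Real.exp_add]; ring_nf
    rw [Real.norm_of_nonneg (mul_nonneg h1 (Real.exp_pos _).le), h4, ← mul_assoc]
    exact mul_le_mul_of_nonneg_right (h2.trans h3) (Real.exp_pos _).le

theorem aux_logexp_integral :
    ∫ t in Set.Ioi (0:ℝ), Real.log t * Real.exp (-t) = -Real.eulerMascheroniConstant := by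
  have h1 := Complex.hasDerivAt_GammaIntegral (s := 1) (by simp)
  have h2 := Complex.hasDerivAt_Gamma_one
  have h3 : Complex.GammaIntegral =ᶠ[𝓝 1] Complex.Gamma := by
    have : {s : ℂ | 0 < s.re} ∈ 𝓝 (1:ℂ) :=
      (isOpen_lt continuous_const Complex.continuous_re).mem_nhds (by simp)
    filter_upwards [this] with s hs
    exact (Complex.Gamma_eq_integral hs).symm
  have h4 := h1.unique (h2.congr_of_eventuallyEq h3)
  simp only [sub_self, Complex.cpow_zero, one_mul] at h4
  have h5 : ∫ t in Set.Ioi (0:ℝ), ((Real.log t : ℂ) * (Real.exp (-t) : ℂ))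
      = ((∫ t in Set.Ioi (0:ℝ), Real.log t * Real.exp (-t) : ℝ) : ℂ) := by
    have h6 : ∫ t in Set.Ioi (0:ℝ), ((Real.log t * Real.exp (-t) : ℝ) : ℂ)
        = ((∫ t in Set.Ioi (0:ℝ), Real.log t * Real.exp (-t) : ℝ) : ℂ) := integral_ofReal
    rw [← h6]
    simp only [Complex.ofReal_mul]
  rw [h5] at h4
  exact_mod_cast h4

theorem aux_A_integrable :
    IntegrableOn (fun u : ℝ => u⁻¹ * (1 - Real.exp (-u))) (Set.Ioc 0 1) := by
  have hg : IntegrableOn (fun _ : ℝ => (1:ℝ)) (Set.Ioc 0 1) := by simp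
  refine Integrable.mono' hg (by fun_prop) ?_
  refine (ae_restrict_iff' measurableSet_Ioc).2 (Eventually.of_forall fun u hu => ?_)
  have h1 := Real.add_one_le_exp (-u)
  have h2 : Real.exp (-u) ≤ 1 := by rw [Real.exp_le_one_iff]; linarith [hu.1]
  have h3 : 0 < u := hu.1
  rw [Real.norm_of_nonneg (mul_nonneg (by positivity) (by linarith)), inv_mul_le_iff₀ h3]
  linarith

theorem aux_B_integrable :
    IntegrableOn (fun u : ℝ => u⁻¹ * Real.exp (-u)) (Set.Ioi 1) := by
  have hg : IntegrableOn (fun x : ℝ => Real.exp (-1 * x)) (Set.Ioi 1) :=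
    exp_neg_integrableOn_Ioi 1 (by norm_num)
  refine Integrable.mono' hg (by fun_prop) ?_
  refine (ae_restrict_iff' measurableSet_Ioi).2 (Eventually.of_forall fun u hu => ?_)
  have hu : 1 < u := hu
  have := inv_le_one_of_one_le₀ hu.le
  have h4 := Real.exp_pos (-u)
  rw [Real.norm_of_nonneg (by positivity), neg_one_mul]
  nlinarith

theorem aux_A_integral : ∫ u in Set.Ioc (0:ℝ) 1, u⁻¹ * (1 - Real.exp (-u))
    = - ∫ u in Set.Ioc (0:ℝ) 1, Real.log u * Real.exp (-u) := by
  have hL : IntegrableOn (fun t : ℝ => Real.log t * Real.exp (-t)) (Set.Ioc 0 1) :=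
    aux_logexp_integrable.mono_set Set.Ioc_subset_Ioi_self
  have hint : IntervalIntegrable (fun u : ℝ => u⁻¹ * (1 - Real.exp (-u))
      + Real.log u * Real.exp (-u)) volume 0 1 :=
    (intervalIntegrable_iff_integrableOn_Ioc_of_le zero_le_one).2 (aux_A_integrable.add hL)
  have h := intervalIntegral.integral_eq_sub_of_hasDerivAt_of_tendsto
    (f := fun u => (1 - Real.exp (-u)) * Real.log u) (fa := 0) (fb := 0) one_pos ?_ hint ?_ ?_
  · rw [intervalIntegral.integral_of_le zero_le_one, integral_add aux_A_integrable hL] at h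
    linarith
  · intro x hx
    have h1 : HasDerivAt (fun u : ℝ => 1 - Real.exp (-u)) (Real.exp (-x)) x := by
      have := ((hasDerivAt_id x).neg.exp).const_sub 1
      refine this.congr_deriv ?_
      simp
    refine (h1.mul (Real.hasDerivAt_log hx.1.ne')).congr_deriv ?_
    ring
  · have hz := tendsto_log_mul_rpow_nhdsGT_zero one_pos
    simp only [Real.rpow_one] at hz
    refine squeeze_zero_norm' ?_ (by simpa using hz.norm)
    filter_upwards [self_mem_nhdsWithin] with u hu
    have hu : 0 < u := hu
    have h1 := Real.add_one_le_exp (-u)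
    have h2 : Real.exp (-u) ≤ 1 := by rw [Real.exp_le_one_iff]; linarith
    rw [norm_mul, Real.norm_of_nonneg (show 0 ≤ 1 - Real.exp (-u) by linarith), mul_comm]
    simp only [Real.norm_eq_abs, abs_of_pos hu]
    exact mul_le_mul_of_nonneg_left (by linarith) (abs_nonneg _)
  · have hc : ContinuousAt (fun u : ℝ => (1 - Real.exp (-u)) * Real.log u) 1 := by
      have := Real.continuousAt_log (x := 1) one_ne_zero
      fun_prop
    have := hc.tendsto
    simp only [Real.log_one, mul_zero] at this
    exact this.mono_left nhdsWithin_le_nhds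

theorem aux_B_integral : ∫ u in Set.Ioi (1:ℝ), u⁻¹ * Real.exp (-u)
    = ∫ u in Set.Ioi (1:ℝ), Real.log u * Real.exp (-u) := by
  have hL : IntegrableOn (fun t : ℝ => Real.log t * Real.exp (-t)) (Set.Ioi 1) :=
    aux_logexp_integrable.mono_set (Set.Ioi_subset_Ioi zero_le_one)
  have h := integral_Ioi_of_hasDerivAt_of_tendsto' (a := 1) (m := 0)
    (f := fun u => Real.exp (-u) * Real.log u)
    (f' := fun u => u⁻¹ * Real.exp (-u) - Real.log u * Real.exp (-u)) ?_
    (aux_B_integrable.sub hL) ?_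
  · rw [integral_sub aux_B_integrable hL] at h
    simp at h
    linarith
  · intro x hx
    have hx : 1 ≤ x := hx
    have h1 : HasDerivAt (fun u : ℝ => Real.exp (-u)) (-Real.exp (-x)) x := by
      have := ((hasDerivAt_id x).neg.exp)
      refine this.congr_deriv ?_
      simp
    refine (h1.mul (Real.hasDerivAt_log (by linarith))).congr_deriv ?_
    ring
  · have hz : Tendsto (fun u : ℝ => u ^ 1 * Real.exp (-u)) atTop (𝓝 0) :=
      Real.tendsto_pow_mul_exp_neg_atTop_nhds_zero 1
    refine squeeze_zero' ?_ ?_ hz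
    · filter_upwards [eventually_ge_atTop 1] with u hu
      exact mul_nonneg (Real.exp_pos _).le (Real.log_nonneg hu)
    · filter_upwards [eventually_ge_atTop 1] with u hu
      rw [mul_comm, pow_one]
      exact mul_le_mul_of_nonneg_right
        ((Real.log_le_sub_one_of_pos (by linarith)).trans (by linarith)) (Real.exp_pos _).le

theorem aux_gamma : (∫ u in Set.Ioc (0:ℝ) 1, u⁻¹ * (1 - Real.exp (-u)))
    - ∫ u in Set.Ioi (1:ℝ), u⁻¹ * Real.exp (-u) = Real.eulerMascheroniConstant := by
  have h := aux_logexp_integral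
  have hL := aux_logexp_integrable
  rw [← Set.Ioc_union_Ioi_eq_Ioi (zero_le_one (α := ℝ))] at h hL
  rw [setIntegral_union (Set.Ioc_disjoint_Ioi le_rfl) measurableSet_Ioi hL.left_of_union
    hL.right_of_union] at h
  rw [aux_A_integral, aux_B_integral]
  linarith

theorem aux_tanh_div_integrable (b : ℝ) (hb : 0 ≤ b) :
    IntervalIntegrable (fun u : ℝ => u⁻¹ * Real.tanh u) volume 0 b := by
  rw [intervalIntegrable_iff_integrableOn_Ioc_of_le hb]
  have hg : IntegrableOn (fun _ : ℝ => (1:ℝ)) (Set.Ioc 0 b) := by simp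
  have hm : Measurable Real.tanh := aux_cont_tanh.measurable
  refine Integrable.mono' hg (by fun_prop) ?_
  refine (ae_restrict_iff' measurableSet_Ioc).2 (Eventually.of_forall fun u hu => ?_)
  have h3 : 0 < u := hu.1
  rw [Real.norm_of_nonneg (mul_nonneg (by positivity) (aux_tanh_nonneg h3.le)), inv_mul_le_iff₀ h3]
  linarith [aux_tanh_le h3.le]

theorem aux_const : Tendsto (fun a : ℝ => (∫ u in (0:ℝ)..a, u⁻¹ * Real.tanh u) - Real.log a)
    atTop (𝓝 (Real.log (4 / Real.pi) + Real.eulerMascheroniConstant)) := by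
  have hD := aux_D
  have hDi := aux_D_integrable
  rw [← Set.Ioc_union_Ioi_eq_Ioi (zero_le_one (α := ℝ))] at hD hDi
  have hD1 := hDi.left_of_union
  have hD2 := hDi.right_of_union
  rw [setIntegral_union (Set.Ioc_disjoint_Ioi le_rfl) measurableSet_Ioi hD1 hD2] at hD
  have hC2 : IntegrableOn (fun u : ℝ => u⁻¹ * (Real.tanh u - 1)) (Set.Ioi 1) := by
    refine (hD2.sub aux_B_integrable).congr (Eventually.of_forall fun u => ?_)
    simp only [Pi.sub_apply]
    ring
  have e2 : ∫ u in Set.Ioi (1:ℝ), u⁻¹ * (Real.tanh u - 1) =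
      (∫ u in Set.Ioi (1:ℝ), u⁻¹ * (Real.exp (-u) - (1 - Real.tanh u)))
       - ∫ u in Set.Ioi (1:ℝ), u⁻¹ * Real.exp (-u) := by
    rw [← integral_sub hD2 aux_B_integrable]
    congr 1; funext u; ring
  have e1 : ∫ u in (0:ℝ)..1, u⁻¹ * Real.tanh u =
      (∫ u in Set.Ioc (0:ℝ) 1, u⁻¹ * (Real.exp (-u) - (1 - Real.tanh u)))
       + ∫ u in Set.Ioc (0:ℝ) 1, u⁻¹ * (1 - Real.exp (-u)) := by
    rw [← integral_add hD1 aux_A_integrable, intervalIntegral.integral_of_le zero_le_one]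
    congr 1; funext u; ring
  have hlim := (intervalIntegral_tendsto_integral_Ioi 1 hC2 tendsto_id).const_add
    (∫ u in (0:ℝ)..1, u⁻¹ * Real.tanh u)
  have e3 : (∫ u in (0:ℝ)..1, u⁻¹ * Real.tanh u) + ∫ u in Set.Ioi (1:ℝ), u⁻¹ * (Real.tanh u - 1)
      = Real.log (4 / Real.pi) + Real.eulerMascheroniConstant := by
    rw [e1, e2, ← hD, ← aux_gamma]; ring
  rw [e3] at hlim
  refine hlim.congr' ?_
  filter_upwards [eventually_ge_atTop 1] with a ha
  have i0 := aux_tanh_div_integrable 1 zero_le_one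
  have ia := aux_tanh_div_integrable a (by linarith)
  have i1 : IntervalIntegrable (fun u : ℝ => u⁻¹ * Real.tanh u) volume 1 a := i0.symm.trans ia
  have ii : IntervalIntegrable (fun u : ℝ => u⁻¹) volume 1 a := by
    rw [intervalIntegrable_inv_iff]
    right
    rw [Set.uIcc_of_le ha]
    intro h; linarith [h.1]
  have hl : ∫ u in (1:ℝ)..a, u⁻¹ = Real.log a := by
    rw [integral_inv_of_pos one_pos (by linarith), div_one]
  rw [← intervalIntegral.integral_add_adjacent_intervals i0 i1, ← hl, add_sub_assoc,
    ← intervalIntegral.integral_sub i1 ii]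
  congr 1
  simp only [id]
  congr 1; funext u; ring

theorem aux_diff_tanh : DifferentiableAt ℝ Real.tanh 0 := by
  have : Real.tanh = fun x => Real.sinh x / Real.cosh x := by
    funext x; exact Real.tanh_eq_sinh_div_cosh x
  rw [this]
  exact Real.differentiable_sinh.differentiableAt.div Real.differentiable_cosh.differentiableAt
    (Real.cosh_pos 0).ne'

theorem aux_cont_dslope : Continuous (dslope Real.tanh 0) := by
  rw [← continuousOn_univ]
  exact (continuousOn_dslope univ_mem).2 ⟨aux_cont_tanh.continuousOn, aux_diff_tanh⟩

theorem aux_dslope {u : ℝ} (hu : u ≠ 0) : dslope Real.tanh 0 u = u⁻¹ * Real.tanh u := by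
  rw [dslope_of_ne _ hu, slope_def_field]
  simp [div_eq_inv_mul]

theorem aux_ae_ne (c : ℝ) : ∀ᵐ p : ℝ, p ≠ c := by
  simp [ae_iff, measure_singleton]

theorem aux_dslope_even (u : ℝ) : dslope Real.tanh 0 (-u) = dslope Real.tanh 0 u := by
  by_cases hu : u = 0
  · simp [hu]
  · rw [aux_dslope hu, aux_dslope (neg_ne_zero.2 hu), Real.tanh_neg, inv_neg]; ring

theorem aux_S {a : ℝ} (ha : 0 < a) :
    ∫ p in (0:ℝ)..2, p * (Real.tanh (a * (p ^ 2 - 1)) / (p ^ 2 - 1)) =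
      ((∫ u in (0:ℝ)..a, u⁻¹ * Real.tanh u) + ∫ u in (0:ℝ)..(3 * a), u⁻¹ * Real.tanh u) / 2 := by
  have hI : ∀ b c : ℝ, ∫ u in b..c, u⁻¹ * Real.tanh u = ∫ u in b..c, dslope Real.tanh 0 u := by
    intro b c
    apply intervalIntegral.integral_congr_ae
    filter_upwards [aux_ae_ne 0] with u hu _
    exact (aux_dslope hu).symm
  have hsub := intervalIntegral.integral_comp_mul_deriv (a := 0) (b := 2)
    (f := fun p : ℝ => a * (p ^ 2 - 1)) (f' := fun p => 2 * a * p) (g := dslope Real.tanh 0)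
    (fun x _ => by
      have := (((hasDerivAt_id x).pow 2).sub_const 1).const_mul a
      refine this.congr_deriv ?_
      simp; ring) (by fun_prop) aux_cont_dslope
  have e1 : ∫ p in (0:ℝ)..2, p * (Real.tanh (a * (p ^ 2 - 1)) / (p ^ 2 - 1)) =
      ∫ p in (0:ℝ)..2, (1/2) * ((dslope Real.tanh 0 ∘ fun p : ℝ => a * (p ^ 2 - 1)) p * (2 * a * p)) := by
    apply intervalIntegral.integral_congr_ae
    filter_upwards [aux_ae_ne 1] with p hp hp0
    rw [Set.uIoc_of_le (by norm_num)] at hp0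
    have h0 : 0 < p := hp0.1
    have hne : p ^ 2 - 1 ≠ 0 := by
      intro h
      apply hp
      nlinarith
    simp only [Function.comp]
    rw [aux_dslope (mul_ne_zero ha.ne' hne)]
    field_simp
  rw [e1, intervalIntegral.integral_const_mul, hsub, hI, hI]
  have hi : ∀ b c : ℝ, IntervalIntegrable (dslope Real.tanh 0) volume b c :=
    fun b c => aux_cont_dslope.intervalIntegrable b c
  have e2 : ∫ u in (0:ℝ)..a, dslope Real.tanh 0 u = ∫ u in (-a)..0, dslope Real.tanh 0 u := by
    have := intervalIntegral.integral_comp_neg (a := 0) (b := a) (dslope Real.tanh 0)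
    simp only [aux_dslope_even, neg_zero] at this
    exact this
  rw [e2, intervalIntegral.integral_add_adjacent_intervals (hi _ _) (hi _ _)]
  have e3 : a * ((0:ℝ) ^ 2 - 1) = -a := by ring
  have e4 : a * ((2:ℝ) ^ 2 - 1) = 3 * a := by ring
  simp only [e3, e4]
  ring

theorem aux_S_lim : Tendsto (fun a : ℝ =>
    (∫ p in (0:ℝ)..2, p * (Real.tanh (a * (p ^ 2 - 1)) / (p ^ 2 - 1))) - Real.log a) atTop
    (𝓝 (Real.log (4 / Real.pi) + Real.eulerMascheroniConstant + Real.log 3 / 2)) := by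
  have h3 : Tendsto (fun a : ℝ => 3 * a) atTop atTop := tendsto_id.const_mul_atTop (by norm_num)
  have h := (((aux_const).add (aux_const.comp h3)).div_const 2).add_const (Real.log 3 / 2)
  have e : (Real.log (4 / Real.pi) + Real.eulerMascheroniConstant +
      (Real.log (4 / Real.pi) + Real.eulerMascheroniConstant)) / 2 + Real.log 3 / 2 =
      Real.log (4 / Real.pi) + Real.eulerMascheroniConstant + Real.log 3 / 2 := by ring
  rw [e] at h
  refine h.congr' ?_
  filter_upwards [eventually_gt_atTop 0] with a ha
  simp only [Function.comp]
  rw [aux_S ha, Real.log_mul (by norm_num) ha.ne']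
  ring

theorem aux_abs_tanh_le (x : ℝ) : |Real.tanh x| ≤ |x| := by
  rcases le_total 0 x with h | h
  · rw [abs_of_nonneg (aux_tanh_nonneg h), abs_of_nonneg h]; exact aux_tanh_le h
  · have h' : 0 ≤ -x := by linarith
    rw [← abs_neg x, ← abs_neg (Real.tanh x), ← Real.tanh_neg,
      abs_of_nonneg (aux_tanh_nonneg h'), abs_of_nonneg h']
    exact aux_tanh_le h'

theorem aux_h_le {a : ℝ} (ha : 0 ≤ a) (x : ℝ) : |Real.tanh (a * x) / x| ≤ a := by
  by_cases hx : x = 0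
  · simp [hx, ha]
  · rw [abs_div, div_le_iff₀ (abs_pos.2 hx)]
    refine (aux_abs_tanh_le _).trans ?_
    rw [abs_mul, abs_of_nonneg ha]

theorem aux_lim_pos {x : ℝ} (hx : 0 < x) :
    Tendsto (fun a : ℝ => Real.tanh (a * x)) atTop (𝓝 1) :=
  aux_tendsto_tanh.comp (tendsto_id.atTop_mul_const hx)

theorem aux_lim_neg {x : ℝ} (hx : x < 0) :
    Tendsto (fun a : ℝ => Real.tanh (a * x)) atTop (𝓝 (-1)) := by
  have := (aux_lim_pos (x := -x) (by linarith)).neg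
  refine this.congr fun a => ?_
  rw [mul_neg, Real.tanh_neg, neg_neg]

theorem aux_inner_bound (κ a : ℝ) {p : ℝ} (hp : 0 < p) :
    |(p ^ 2 - p) * (Real.tanh (a * (p ^ 2 - 1)) / (p ^ 2 - 1)) - p ^ 2 / (p ^ 2 + κ ^ 2)| ≤ 2 := by
  have h2 : |p ^ 2 / (p ^ 2 + κ ^ 2)| ≤ 1 := by
    rw [abs_of_nonneg (by positivity), div_le_one (by positivity)]
    nlinarith [sq_nonneg κ]
  have h1 : |(p ^ 2 - p) * (Real.tanh (a * (p ^ 2 - 1)) / (p ^ 2 - 1))| ≤ 1 := by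
    by_cases h : p = 1
    · simp [h]
    · have hne : p - 1 ≠ 0 := sub_ne_zero.2 h
      have e : (p ^ 2 - p) * (Real.tanh (a * (p ^ 2 - 1)) / (p ^ 2 - 1))
          = Real.tanh (a * (p ^ 2 - 1)) * (p / (p + 1)) := by
        rw [show p ^ 2 - 1 = (p - 1) * (p + 1) by ring]
        have : p + 1 ≠ 0 := by positivity
        field_simp
      rw [e, abs_mul]
      have h3 := (Real.abs_tanh_lt_one (a * (p ^ 2 - 1))).le
      have h4 : |p / (p + 1)| ≤ 1 := by
        rw [abs_of_nonneg (by positivity), div_le_one (by positivity)]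
        linarith
      exact mul_le_one₀ h3 (abs_nonneg _) h4
  calc _ ≤ _ := abs_sub _ _
    _ ≤ 1 + 1 := add_le_add h1 h2
    _ = 2 := by norm_num

theorem aux_inner_int (κ a : ℝ) : IntervalIntegrable (fun p : ℝ =>
    (p ^ 2 - p) * (Real.tanh (a * (p ^ 2 - 1)) / (p ^ 2 - 1)) - p ^ 2 / (p ^ 2 + κ ^ 2))
    volume 0 2 := by
  rw [intervalIntegrable_iff_integrableOn_Ioc_of_le (by norm_num)]
  have hg : IntegrableOn (fun _ : ℝ => (2:ℝ)) (Set.Ioc 0 2) := by simp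
  have hm : Measurable Real.tanh := aux_cont_tanh.measurable
  refine Integrable.mono' hg (by fun_prop) ?_
  refine (ae_restrict_iff' measurableSet_Ioc).2 (Eventually.of_forall fun u hu => ?_)
  exact aux_inner_bound κ a hu.1

theorem aux_ph_int {a : ℝ} (ha : 0 ≤ a) : IntervalIntegrable (fun p : ℝ =>
    p * (Real.tanh (a * (p ^ 2 - 1)) / (p ^ 2 - 1))) volume 0 2 := by
  rw [intervalIntegrable_iff_integrableOn_Ioc_of_le (by norm_num)]
  have hg : IntegrableOn (fun _ : ℝ => 2 * a) (Set.Ioc 0 2) :=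
    integrableOn_const (by simp)
  have hm : Measurable Real.tanh := aux_cont_tanh.measurable
  refine Integrable.mono' hg (by fun_prop) ?_
  refine (ae_restrict_iff' measurableSet_Ioc).2 (Eventually.of_forall fun u hu => ?_)
  have h0 : 0 < u := hu.1
  rw [norm_mul]
  refine mul_le_mul ?_ (aux_h_le ha _) (norm_nonneg _) (by norm_num)
  rw [Real.norm_of_nonneg h0.le]; exact hu.2

/-- The pointwise limit of the inner remainder. -/
def auxL (κ p : ℝ) : ℝ :=
  (if p < 1 then (-1 : ℝ) else 1) * (p / (p + 1)) - p ^ 2 / (p ^ 2 + κ ^ 2)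

theorem aux_inner_lim (κ : ℝ) : Tendsto (fun a : ℝ => ∫ p in (0:ℝ)..2,
    ((p ^ 2 - p) * (Real.tanh (a * (p ^ 2 - 1)) / (p ^ 2 - 1)) - p ^ 2 / (p ^ 2 + κ ^ 2)))
    atTop (𝓝 (∫ p in (0:ℝ)..2, auxL κ p)) := by
  have hm : Measurable Real.tanh := aux_cont_tanh.measurable
  refine intervalIntegral.tendsto_integral_filter_of_dominated_convergence (fun _ => 2) ?_ ?_ ?_ ?_
  · filter_upwards with a
    fun_prop
  · filter_upwards with a
    filter_upwards with p hp
    rw [Set.uIoc_of_le (by norm_num)] at hp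
    exact aux_inner_bound κ a hp.1
  · simp
  · filter_upwards [aux_ae_ne 1] with p hp1 hp
    rw [Set.uIoc_of_le (by norm_num)] at hp
    have hp0 : 0 < p := hp.1
    unfold auxL
    refine Tendsto.sub_const ?_ _
    have e : ∀ a : ℝ, (p ^ 2 - p) * (Real.tanh (a * (p ^ 2 - 1)) / (p ^ 2 - 1))
          = Real.tanh (a * (p ^ 2 - 1)) * (p / (p + 1)) := by
      intro a
      rw [show p ^ 2 - 1 = (p - 1) * (p + 1) by ring]
      have : p + 1 ≠ 0 := by positivity
      have hne : p - 1 ≠ 0 := sub_ne_zero.2 hp1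
      field_simp
    simp only [e]
    refine Tendsto.mul_const _ ?_
    split_ifs with h
    · exact aux_lim_neg (by nlinarith)
    · have : 1 < p := lt_of_le_of_ne (not_lt.1 h) (Ne.symm hp1)
      exact aux_lim_pos (by nlinarith)

theorem auxL_int (κ : ℝ) : IntegrableOn (auxL κ) (Set.Ioc 0 2) := by
  have hg : IntegrableOn (fun _ : ℝ => (2:ℝ)) (Set.Ioc 0 2) := by simp
  have hm : Measurable (auxL κ) := by
    unfold auxL
    refine Measurable.sub (Measurable.mul ?_ (by fun_prop)) (by fun_prop)
    exact Measurable.ite (measurableSet_lt measurable_id measurable_const) measurable_const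
      measurable_const
  refine Integrable.mono' hg hm.aestronglyMeasurable ?_
  refine (ae_restrict_iff' measurableSet_Ioc).2 (Eventually.of_forall fun p hp => ?_)
  have hp0 : 0 < p := hp.1
  have h2 : |p ^ 2 / (p ^ 2 + κ ^ 2)| ≤ 1 := by
    rw [abs_of_nonneg (by positivity), div_le_one (by positivity)]
    nlinarith [sq_nonneg κ]
  have h4 : |p / (p + 1)| ≤ 1 := by
    rw [abs_of_nonneg (by positivity), div_le_one (by positivity)]
    linarith
  have h3 : |(if p < 1 then (-1 : ℝ) else 1)| ≤ 1 := by split_ifs <;> simp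
  unfold auxL
  calc _ ≤ _ := abs_sub _ _
    _ ≤ 1 + 1 := add_le_add (by rw [abs_mul]; exact mul_le_one₀ h3 (abs_nonneg _) h4) h2
    _ = 2 := by norm_num

theorem aux_arctan_deriv {κ : ℝ} (hκ : 0 < κ) (x : ℝ) :
    HasDerivAt (fun p : ℝ => κ * Real.arctan (p / κ)) (κ ^ 2 / (x ^ 2 + κ ^ 2)) x := by
  have := (((hasDerivAt_id x).div_const κ).arctan).const_mul κ
  refine this.congr_deriv ?_
  simp only [id]
  have : x ^ 2 + κ ^ 2 ≠ 0 := by positivity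
  have : 1 + (x / κ) ^ 2 ≠ 0 := by positivity
  field_simp
  ring

theorem auxL_integral {κ : ℝ} (hκ : 0 < κ) : ∫ p in (0:ℝ)..2, auxL κ p =
    2 * Real.log 2 - Real.log 3 - 2 + κ * Real.arctan (2 / κ) := by
  have hi : IntervalIntegrable (auxL κ) volume 0 2 :=
    (intervalIntegrable_iff_integrableOn_Ioc_of_le (by norm_num)).2 (auxL_int κ)
  have hi1 : IntervalIntegrable (auxL κ) volume 0 1 := hi.mono_set (by
    rw [Set.uIcc_of_le (by norm_num), Set.uIcc_of_le (by norm_num)]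
    exact Set.Icc_subset_Icc le_rfl (by norm_num))
  have hi2 : IntervalIntegrable (auxL κ) volume 1 2 := hi1.symm.trans hi
  have hlog : ∀ x : ℝ, 0 ≤ x → HasDerivAt (fun p : ℝ => Real.log (p + 1)) (1 / (x + 1)) x := by
    intro x hx
    have h1 : x + 1 ≠ 0 := by positivity
    exact ((hasDerivAt_id x).add_const 1).log h1
  have f1 : ∀ x : ℝ, 0 ≤ x → HasDerivAt (fun p : ℝ => -(p - Real.log (p + 1)) - p
      + κ * Real.arctan (p / κ)) (-(1 - 1 / (x + 1)) - 1 + κ ^ 2 / (x ^ 2 + κ ^ 2)) x := by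
    intro x hx
    exact ((((hasDerivAt_id x).sub (hlog x hx)).neg).sub (hasDerivAt_id x)).add
      (aux_arctan_deriv hκ x)
  have f2 : ∀ x : ℝ, 0 ≤ x → HasDerivAt (fun p : ℝ => (p - Real.log (p + 1)) - p
      + κ * Real.arctan (p / κ)) ((1 - 1 / (x + 1)) - 1 + κ ^ 2 / (x ^ 2 + κ ^ 2)) x := by
    intro x hx
    exact (((hasDerivAt_id x).sub (hlog x hx)).sub (hasDerivAt_id x)).add
      (aux_arctan_deriv hκ x)
  have h1 := intervalIntegral.integral_eq_sub_of_hasDerivAt_of_tendsto (f' := auxL κ) one_pos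
    (fun x hx => (f1 x hx.1.le).congr_deriv (by
      have : x + 1 ≠ 0 := by linarith [hx.1]
      have : x ^ 2 + κ ^ 2 ≠ 0 := by positivity
      unfold auxL
      rw [if_pos hx.2]
      field_simp
      ring)) hi1
    ((f1 0 le_rfl).continuousAt.tendsto.mono_left nhdsWithin_le_nhds)
    ((f1 1 zero_le_one).continuousAt.tendsto.mono_left nhdsWithin_le_nhds)
  have h2 := intervalIntegral.integral_eq_sub_of_hasDerivAt_of_tendsto (f' := auxL κ)
    (show (1:ℝ) < 2 by norm_num)
    (fun x hx => (f2 x (by linarith [hx.1])).congr_deriv (by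
      have : x + 1 ≠ 0 := by linarith [hx.1]
      have : x ^ 2 + κ ^ 2 ≠ 0 := by positivity
      unfold auxL
      rw [if_neg (not_lt.2 hx.1.le)]
      field_simp
      ring)) hi2
    ((f2 1 zero_le_one).continuousAt.tendsto.mono_left nhdsWithin_le_nhds)
    ((f2 2 zero_le_two).continuousAt.tendsto.mono_left nhdsWithin_le_nhds)
  rw [← intervalIntegral.integral_add_adjacent_intervals hi1 hi2, h1, h2]
  norm_num
  ring

theorem aux_outer_deriv {κ : ℝ} (hκ : 0 < κ) {x : ℝ} (hx : 2 ≤ x) :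
    HasDerivAt (fun p : ℝ => (Real.log ((p - 1) / (p + 1))) / 2 + κ * Real.arctan (p / κ))
      (x ^ 2 / (x ^ 2 - 1) - x ^ 2 / (x ^ 2 + κ ^ 2)) x := by
  have hd := ((hasDerivAt_id x).sub_const 1).div ((hasDerivAt_id x).add_const 1)
    (by simp only [id]; positivity)
  have h1 : x - 1 ≠ 0 := by linarith
  have h2 : x + 1 ≠ 0 := by linarith
  have h3 := ((hd.log (div_ne_zero h1 h2)).div_const 2).add (aux_arctan_deriv hκ x)
  refine h3.congr_deriv ?_
  have : x ^ 2 + κ ^ 2 ≠ 0 := by positivity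
  rw [show x ^ 2 - 1 = (x - 1) * (x + 1) by ring]
  simp only [id, Pi.div_apply]
  field_simp
  ring

theorem aux_outer_tendsto {κ : ℝ} (hκ : 0 < κ) :
    Tendsto (fun p : ℝ => (Real.log ((p - 1) / (p + 1))) / 2 + κ * Real.arctan (p / κ))
      atTop (𝓝 (κ * (Real.pi / 2))) := by
  have h1 : Tendsto (fun p : ℝ => 1 - 2 / (p + 1)) atTop (𝓝 1) := by
    have : Tendsto (fun p : ℝ => 2 / (p + 1)) atTop (𝓝 0) :=
      tendsto_const_nhds.div_atTop (tendsto_atTop_add_const_right _ _ tendsto_id)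
    simpa using this.const_sub 1
  have h2 : Tendsto (fun p : ℝ => (p - 1) / (p + 1)) atTop (𝓝 1) := by
    refine h1.congr' ?_
    filter_upwards [eventually_gt_atTop 0] with p hp
    field_simp
    ring
  have h3 : Tendsto (fun p : ℝ => Real.log ((p - 1) / (p + 1))) atTop (𝓝 0) := by
    have h5 := (Real.continuousAt_log one_ne_zero).tendsto.comp h2
    rw [Real.log_one] at h5
    exact h5
  have h4 : Tendsto (fun p : ℝ => Real.arctan (p / κ)) atTop (𝓝 (Real.pi / 2)) :=
    (Real.tendsto_arctan_atTop.mono_right nhdsWithin_le_nhds).comp (tendsto_id.atTop_div_const hκ)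
  simpa using (h3.div_const 2).add (h4.const_mul κ)

theorem aux_outer_nonneg {κ x : ℝ} (hx : 2 < x) :
    0 ≤ x ^ 2 / (x ^ 2 - 1) - x ^ 2 / (x ^ 2 + κ ^ 2) := by
  rw [sub_nonneg]
  have : 0 < x ^ 2 - 1 := by nlinarith
  gcongr
  nlinarith [sq_nonneg κ]

theorem aux_outer_integrable {κ : ℝ} (hκ : 0 < κ) : IntegrableOn
    (fun x : ℝ => x ^ 2 / (x ^ 2 - 1) - x ^ 2 / (x ^ 2 + κ ^ 2)) (Set.Ioi 2) :=
  integrableOn_Ioi_deriv_of_nonneg' (fun _ hx => aux_outer_deriv hκ hx)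
    (fun _ hx => aux_outer_nonneg hx) (aux_outer_tendsto hκ)

theorem aux_outer_integral {κ : ℝ} (hκ : 0 < κ) : ∫ x in Set.Ioi (2:ℝ),
    (x ^ 2 / (x ^ 2 - 1) - x ^ 2 / (x ^ 2 + κ ^ 2)) =
      κ * (Real.pi / 2) + Real.log 3 / 2 - κ * Real.arctan (2 / κ) := by
  rw [integral_Ioi_of_hasDerivAt_of_nonneg' (fun _ hx => aux_outer_deriv hκ hx)
    (fun _ hx => aux_outer_nonneg hx) (aux_outer_tendsto hκ)]
  have : ((2:ℝ) - 1) / (2 + 1) = 3⁻¹ := by norm_num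
  rw [this, Real.log_inv]
  ring

/-- Dominating function on the outer region. -/
def auxB (κ x : ℝ) : ℝ :=
  3 * (x ^ 2 / (x ^ 2 - 1) - x ^ 2 / (x ^ 2 + 1 ^ 2))
    + (x ^ 2 / (x ^ 2 - 1) - x ^ 2 / (x ^ 2 + κ ^ 2))

theorem auxB_int {κ : ℝ} (hκ : 0 < κ) : IntegrableOn (auxB κ) (Set.Ioi 2) :=
  ((aux_outer_integrable one_pos).const_mul 3).add (aux_outer_integrable hκ)

theorem aux_outer_bound (κ : ℝ) {a x : ℝ} (ha : 1 ≤ a) (hx : 2 < x) :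
    |x ^ 2 * (Real.tanh (a * (x ^ 2 - 1)) / (x ^ 2 - 1)) - x ^ 2 / (x ^ 2 + κ ^ 2)| ≤ auxB κ x := by
  have hy : 0 < x ^ 2 - 1 := by nlinarith
  have hn := aux_outer_nonneg (κ := κ) hx
  have h1 : 1 - Real.tanh (a * (x ^ 2 - 1)) ≤ 1 / (x ^ 2 - 1) := by
    refine (aux_one_sub_tanh_le (by positivity)).trans ?_
    apply one_div_le_one_div_of_le hy
    nlinarith
  have h0 := aux_one_sub_tanh_nonneg (a * (x ^ 2 - 1))
  have e : x ^ 2 * (Real.tanh (a * (x ^ 2 - 1)) / (x ^ 2 - 1)) - x ^ 2 / (x ^ 2 + κ ^ 2)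
    = -(x ^ 2 / (x ^ 2 - 1) * (1 - Real.tanh (a * (x ^ 2 - 1)))) +
      (x ^ 2 / (x ^ 2 - 1) - x ^ 2 / (x ^ 2 + κ ^ 2)) := by ring
  have h2 : x ^ 2 / (x ^ 2 - 1) * (1 - Real.tanh (a * (x ^ 2 - 1))) ≤
      3 * (x ^ 2 / (x ^ 2 - 1) - x ^ 2 / (x ^ 2 + 1 ^ 2)) := by
    calc _ ≤ x ^ 2 / (x ^ 2 - 1) * (1 / (x ^ 2 - 1)) :=
          mul_le_mul_of_nonneg_left h1 (by positivity)
      _ ≤ x ^ 2 / (x ^ 2 - 1) * (6 / (x ^ 2 + 1)) := by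
          apply mul_le_mul_of_nonneg_left _ (by positivity)
          rw [div_le_div_iff₀ hy (by positivity)]
          nlinarith
      _ = _ := by
          field_simp
          ring
  have h3 : 0 ≤ x ^ 2 / (x ^ 2 - 1) * (1 - Real.tanh (a * (x ^ 2 - 1))) := by positivity
  rw [e, abs_le]
  unfold auxB
  constructor <;> linarith

theorem aux_outer_int {κ a : ℝ} (hκ : 0 < κ) (ha : 1 ≤ a) : IntegrableOn (fun x : ℝ =>
    x ^ 2 * (Real.tanh (a * (x ^ 2 - 1)) / (x ^ 2 - 1)) - x ^ 2 / (x ^ 2 + κ ^ 2)) (Set.Ioi 2) := by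
  have hm : Measurable Real.tanh := aux_cont_tanh.measurable
  refine Integrable.mono' (auxB_int hκ) (by fun_prop) ?_
  refine (ae_restrict_iff' measurableSet_Ioi).2 (Eventually.of_forall fun u hu => ?_)
  exact aux_outer_bound κ ha hu

theorem aux_outer_lim {κ : ℝ} (hκ : 0 < κ) : Tendsto (fun a : ℝ => ∫ x in Set.Ioi (2:ℝ),
    (x ^ 2 * (Real.tanh (a * (x ^ 2 - 1)) / (x ^ 2 - 1)) - x ^ 2 / (x ^ 2 + κ ^ 2)))
    atTop (𝓝 (∫ x in Set.Ioi (2:ℝ), (x ^ 2 / (x ^ 2 - 1) - x ^ 2 / (x ^ 2 + κ ^ 2)))) := by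
  have hm : Measurable Real.tanh := aux_cont_tanh.measurable
  refine tendsto_integral_filter_of_dominated_convergence (auxB κ) ?_ ?_ (auxB_int hκ) ?_
  · filter_upwards with a
    fun_prop
  · filter_upwards [eventually_ge_atTop 1] with a ha
    refine (ae_restrict_iff' measurableSet_Ioi).2 (Eventually.of_forall fun u hu => ?_)
    exact aux_outer_bound κ ha hu
  · refine (ae_restrict_iff' measurableSet_Ioi).2 (Eventually.of_forall fun x hx => ?_)
    have hx : 2 < x := hx
    refine Tendsto.sub_const ?_ _
    have := ((aux_lim_pos (x := x ^ 2 - 1) (by nlinarith)).div_const (x ^ 2 - 1)).const_mul (x ^ 2)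
    simpa [div_eq_mul_inv] using this

theorem aux_main {κ : ℝ} (hκ : 0 < κ) : Tendsto (fun a : ℝ =>
    (∫ p in Set.Ioi (0:ℝ), (p ^ 2 * (Real.tanh (a * (p ^ 2 - 1)) / (p ^ 2 - 1))
        - p ^ 2 / (p ^ 2 + κ ^ 2))) - Real.log a) atTop
    (𝓝 (Real.log (4 / Real.pi) + Real.eulerMascheroniConstant + 2 * Real.log 2 - 2
      + κ * Real.pi / 2)) := by
  have h := (aux_S_lim.add (aux_inner_lim κ)).add (aux_outer_lim hκ)
  rw [auxL_integral hκ, aux_outer_integral hκ] at h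
  have e : Real.log (4 / Real.pi) + Real.eulerMascheroniConstant + Real.log 3 / 2 +
      (2 * Real.log 2 - Real.log 3 - 2 + κ * Real.arctan (2 / κ)) +
      (κ * (Real.pi / 2) + Real.log 3 / 2 - κ * Real.arctan (2 / κ)) =
      Real.log (4 / Real.pi) + Real.eulerMascheroniConstant + 2 * Real.log 2 - 2
      + κ * Real.pi / 2 := by ring
  rw [e] at h
  refine h.congr' ?_
  filter_upwards [eventually_ge_atTop 1] with a ha
  have i1 := aux_ph_int (a := a) (by linarith)
  have i2 := aux_inner_int κ a
  have i3 := aux_outer_int hκ ha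
  have e1 : ∀ p : ℝ, p * (Real.tanh (a * (p ^ 2 - 1)) / (p ^ 2 - 1)) +
      ((p ^ 2 - p) * (Real.tanh (a * (p ^ 2 - 1)) / (p ^ 2 - 1)) - p ^ 2 / (p ^ 2 + κ ^ 2)) =
      p ^ 2 * (Real.tanh (a * (p ^ 2 - 1)) / (p ^ 2 - 1)) - p ^ 2 / (p ^ 2 + κ ^ 2) := by
    intro p; ring
  have e2 := intervalIntegral.integral_add i1 i2
  have i4 := i1.add i2
  simp only [e1] at e2 i4
  rw [intervalIntegrable_iff_integrableOn_Ioc_of_le (by norm_num)] at i4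
  rw [intervalIntegral.integral_of_le (by norm_num)] at e2
  rw [← Set.Ioc_union_Ioi_eq_Ioi (zero_le_two (α := ℝ)),
    setIntegral_union (Set.Ioc_disjoint_Ioi le_rfl) measurableSet_Ioi i4 i3, e2]
  ring

/-- In any joint limit with `T/μ → 0`,
`m_μ^{(κ)}(T) = √μ (log(μ/T) + γ − 2 + log(8/π) + κπ/2 + o(1))`. -/
theorem mFun_asymptotics (κ : ℝ) (hκ : 0 < κ)
    (T μ : ℕ → ℝ) (hT : ∀ n, 0 < T n) (hμ : ∀ n, 0 < μ n)
    (hlim : Tendsto (fun n => T n / μ n) atTop (𝓝 0)) :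
    Tendsto (fun n =>
        mFun (T n) (μ n) κ / Real.sqrt (μ n) -
          (Real.log (μ n / T n) + Real.eulerMascheroniConstant - 2 +
            Real.log (8 / Real.pi) + κ * Real.pi / 2))
      atTop (𝓝 0) := by
  have ha : Tendsto (fun n => μ n / (2 * T n)) atTop atTop := by
    have h1 : Tendsto (fun n => T n / μ n) atTop (𝓝[>] 0) :=
      tendsto_nhdsWithin_iff.2 ⟨hlim, Eventually.of_forall fun n => div_pos (hT n) (hμ n)⟩
    have h2 := (tendsto_inv_nhdsGT_zero.comp h1).atTop_div_const (show (0:ℝ) < 2 by norm_num)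
    refine h2.congr fun n => ?_
    have := hT n
    have := hμ n
    simp only [Function.comp]
    field_simp
  have h := ((aux_main hκ).comp ha).sub_const (Real.log (4 / Real.pi) +
    Real.eulerMascheroniConstant + 2 * Real.log 2 - 2 + κ * Real.pi / 2)
  rw [sub_self] at h
  refine h.congr fun n => ?_
  have h1 := hT n
  have h2 := hμ n
  simp only [Function.comp]
  rw [← aux_reduce κ (T n) (μ n) h2]
  have e1 : Real.log (μ n / (2 * T n)) = Real.log (μ n / T n) - Real.log 2 := by
    rw [← Real.log_div (by positivity) (by norm_num)]
    congr 1
    field_simp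
  have e2 : Real.log (8 / Real.pi) = Real.log (4 / Real.pi) + Real.log 2 := by
    rw [← Real.log_mul (by positivity) (by norm_num)]
    congr 1
    ring
  rw [e1, e2]
  ring

end
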